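/- The number of unordered pairs {f, g} of distinct elements of F_8 = {c ∈ L_8 : ⟨k_8,c⟩ = −2 and ⟨c,c⟩ = 0} with ⟨f,g⟩ ≥ 2 is exactly 2262600. (This is the source of the bound in the paper's Corollary on simple family graphs: the simple family graph of a real weak del Pezzo surface has at most 2262600 edges, where an edge connects two families with intersection product at least two.) -/

import Mathlib

/-- The intersection form on the Neron-Severi lattice `L_r = ℤ^(r+1)` of a weak del Pezzo
surface of degree `9 - r` in a type 1 basis: `⟨v,w⟩ = v₀w₀ - v₁w₁ - ⋯ - vᵣwᵣ`. -/
def nsForm (r : ℕ) (v w : Fin (r + 1) → ℤ) : ℤ :=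
  v 0 * w 0 - ∑ i : Fin r, v i.succ * w i.succ

/-- The canonical class `k_r = -3e₀ + e₁ + ⋯ + e_r`. -/
def canK (r : ℕ) : Fin (r + 1) → ℤ := fun i => if i = 0 then -3 else 1

/-- The standard basis vector `e_j` of `L_r`. -/
def eVec (r : ℕ) (j : Fin (r + 1)) : Fin (r + 1) → ℤ := fun i => if i = j then 1 else 0

/-- The set of (-2)-classes `R_r = {c : ⟨k_r,c⟩ = 0, ⟨c,c⟩ = -2}`. -/
def Rset (r : ℕ) : Set (Fin (r + 1) → ℤ) :=
  {c | nsForm r (canK r) c = 0 ∧ nsForm r c c = -2}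

/-- The set of (-1)-classes `E_r = {c : ⟨k_r,c⟩ = -1, ⟨c,c⟩ = -1}`. -/
def Eset (r : ℕ) : Set (Fin (r + 1) → ℤ) :=
  {c | nsForm r (canK r) c = -1 ∧ nsForm r c c = -1}

/-- The set of minimal-family classes `F_r = {c : ⟨k_r,c⟩ = -2, ⟨c,c⟩ = 0}`. -/
def Fset (r : ℕ) : Set (Fin (r + 1) → ℤ) :=
  {c | nsForm r (canK r) c = -2 ∧ nsForm r c c = 0}

/-! Write `d = c₀` and `mᵢ = -cᵢ` for `c ∈ F_r`, so `∑ mᵢ = 3d - 2` and `∑ mᵢ² = d²`; let `r ≤ 8`.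
The reflections in the (-2)-classes permute `F_r` and preserve intersection numbers. If `d > 1`,
Noether's inequality gives three indices with `mᵢ + mⱼ + mₖ > d`, and reflecting in
`e₀ - eᵢ - eⱼ - eₖ` lowers `d`; so every class of `F_r` can be moved to some `e₀ - eᵢ`. The classes
meeting `e₀ - eᵢ` at most once are `e₀ - eᵢ` itself and those with `d - mᵢ = 1`; the latter have all
other `mⱼ ∈ {0, 1}`, an odd number of them `1`, so there are `2 ^ (r - 2)` of them. For `r = 8`, the
Cauchy-Schwarz bounds `1 ≤ d ≤ 11` and `0 ≤ mᵢ ≤ 4` leave a finite enumeration, which gives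
`|F_8| = 2160`. Each class thus has `2160 - 1 - 64 = 2095` neighbours, and there are
`2160 * 2095 / 2` edges. -/

open Finset

section IntegerVectors

variable {ι : Type*} {x : ι → ℤ}

theorem eq_zero_or_one_of_sum_sq_eq_sum {s : Finset ι} (h : ∑ i ∈ s, x i ^ 2 = ∑ i ∈ s, x i) :
    ∀ i ∈ s, x i = 0 ∨ x i = 1 := by
  have hterm : ∀ i ∈ s, 0 ≤ x i ^ 2 - x i := fun i _ => sub_nonneg.2 (Int.le_self_sq (x i))
  have hsum : ∑ i ∈ s, (x i ^ 2 - x i) = 0 := by rw [sum_sub_distrib, h, sub_self]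
  intro i hi
  have hi0 := (sum_eq_zero_iff_of_nonneg hterm).1 hsum i hi
  exact (mul_eq_zero.1 (show x i * (x i - 1) = 0 by linarith)).imp_right sub_eq_zero.1

variable [Fintype ι]

theorem exists_three_largest [DecidableEq ι] (hι : 3 ≤ Fintype.card ι) (x : ι → ℤ) :
    ∃ i j k, i ≠ j ∧ i ≠ k ∧ j ≠ k ∧ x k ≤ x j ∧ x j ≤ x i ∧
      ∀ l ∈ (univ.erase i).erase j, x l ≤ x k := by
  have hcard (i : ι) : #(univ.erase i) = Fintype.card ι - 1 := card_erase_of_mem (mem_univ i)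
  obtain ⟨i, -, hi⟩ := exists_max_image univ x (card_pos.1 (by rw [card_univ]; omega))
  obtain ⟨j, hj, hj_max⟩ := exists_max_image (univ.erase i) x
    (card_pos.1 (by rw [hcard]; omega))
  obtain ⟨k, hk, hk_max⟩ := exists_max_image ((univ.erase i).erase j) x
    (card_pos.1 (by rw [card_erase_of_mem hj, hcard]; omega))
  obtain ⟨hkj, hk'⟩ := mem_erase.1 hk
  exact ⟨i, j, k, (ne_of_mem_erase hj).symm, (ne_of_mem_erase hk').symm, hkj.symm,
    hj_max k hk', hi j (mem_univ j), hk_max⟩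

theorem sum_sq_sub_sum_mul_le [DecidableEq ι] (hx : ∀ l, 0 ≤ x l) {i j k : ι} (hij : i ≠ j)
    (hk : ∀ l ∈ (univ.erase i).erase j, x l ≤ x k) :
    ∑ l, x l ^ 2 - (∑ l, x l) * x k ≤ x i * (x i - x k) + x j * (x j - x k) := by
  have hrest : ∑ l ∈ (univ.erase i).erase j, x l * (x l - x k) ≤ 0 :=
    sum_nonpos fun l hl => mul_nonpos_of_nonneg_of_nonpos (hx l) (sub_nonpos.2 (hk l hl))
  calc ∑ l, x l ^ 2 - (∑ l, x l) * x k = ∑ l, x l * (x l - x k) := by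
        simp only [mul_sub, sum_sub_distrib, ← sum_mul, sq]
    _ = x i * (x i - x k) + (x j * (x j - x k) +
          ∑ l ∈ (univ.erase i).erase j, x l * (x l - x k)) := by
        rw [add_sum_erase _ (fun l => x l * (x l - x k)) (mem_erase.2 ⟨hij.symm, mem_univ j⟩),
          add_sum_erase _ (fun l => x l * (x l - x k)) (mem_univ i)]
    _ ≤ x i * (x i - x k) + x j * (x j - x k) := by linarith

variable {d : ℤ}

theorem three_le_card_of_sum_eq_of_sum_sq_eq (hd : 1 < d) (hsum : ∑ i, x i = 3 * d - 2)
    (hsq : ∑ i, x i ^ 2 = d ^ 2) : 3 ≤ Fintype.card ι := by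
  by_contra! hlt
  have hcard : (Fintype.card ι : ℤ) ≤ 2 := by omega
  have hcs := sq_sum_le_card_mul_sum_sq (s := univ) (f := x)
  rw [hsum, hsq, card_univ] at hcs
  nlinarith [mul_le_mul_of_nonneg_right hcard (sq_nonneg d)]

theorem noether_inequality (hd : 1 < d) (hx : ∀ i, 0 ≤ x i) (hsum : ∑ i, x i = 3 * d - 2)
    (hsq : ∑ i, x i ^ 2 = d ^ 2) :
    ∃ i j k, i ≠ j ∧ i ≠ k ∧ j ≠ k ∧ d < x i + x j + x k := by
  classical
  obtain ⟨i, j, k, hij, hik, hjk, hkj, hji, hk_max⟩ :=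
    exists_three_largest (three_le_card_of_sum_eq_of_sum_sq_eq hd hsum hsq) x
  refine ⟨i, j, k, hij, hik, hjk, ?_⟩
  by_contra! hle
  have hlower := sum_sq_sub_sum_mul_le hx hij hk_max
  rw [hsum, hsq] at hlower
  have hupper : x i * (x i - x k) + x j * (x j - x k) ≤ x i * (d - 3 * x k) := by
    nlinarith [mul_le_mul_of_nonneg_right hji (sub_nonneg.2 hkj), hx i]
  have hbound : d * (d - 3 * x k) + 2 * x k ≤ x i * (d - 3 * x k) := by linarith
  have hkd : 0 ≤ d - 3 * x k := by linarith
  have hid : x i ≤ d := by linarith [hx j, hx k]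
  have hxk : x k = 0 := by linarith [hx k, mul_le_mul_of_nonneg_right hid hkd]
  have hxi : x i = d := by
    rw [hxk, mul_zero, mul_zero, add_zero, sub_zero] at hbound
    exact hid.antisymm (le_of_mul_le_mul_right hbound (by linarith))
  have hothers : ∀ l ∈ univ.erase i, x l = 0 := by
    have hsq_rest := add_sum_erase univ (fun l => x l ^ 2) (mem_univ i)
    rw [hsq, hxi, add_eq_left] at hsq_rest
    exact fun l hl => sq_eq_zero_iff.1
      ((sum_eq_zero_iff_of_nonneg fun l _ => sq_nonneg _).1 hsq_rest l hl)
  have hsum_rest := add_sum_erase univ x (mem_univ i)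
  rw [sum_eq_zero hothers] at hsum_rest
  omega

end IntegerVectors

theorem two_mul_card_filter_odd_powerset {ι : Type*} {s : Finset ι} (hs : s.Nonempty) :
    2 * #{t ∈ s.powerset | Odd #t} = 2 ^ #s := by
  have hterm (t : Finset ι) : 2 * (if Odd #t then 1 else 0 : ℤ) = 1 - (-1) ^ #t := by
    rcases Nat.even_or_odd #t with ht | ht
    · rw [if_neg (Nat.not_odd_iff_even.2 ht), ht.neg_one_pow]; rfl
    · rw [if_pos ht, ht.neg_one_pow]; rfl
  zify
  rw [card_filter, Nat.cast_sum, mul_sum]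
  simp only [Nat.cast_ite, Nat.cast_one, Nat.cast_zero, hterm, sum_sub_distrib, sum_const,
    sum_powerset_neg_one_pow_card_of_nonempty hs, card_powerset, sub_zero, nsmul_one, Nat.cast_pow,
    Nat.cast_ofNat]

section MomentTuples

variable (A : Finset ℤ)

/-- The tuples with entries in `A`, sum `s` and sum of squares `q`. -/
def momentTuples (n : ℕ) (s q : ℤ) : Finset (Fin n → ℤ) :=
  {x ∈ Fintype.piFinset fun _ => A | ∑ i, x i = s ∧ ∑ i, x i ^ 2 = q}

/-- Evaluates `#(momentTuples A n s q)` entry by entry, discarding the branches that violate the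
Cauchy-Schwarz inequality so that the kernel can run the recursion. -/
def momentTupleCount : ℕ → ℤ → ℤ → ℕ
  | 0, s, q => if s = 0 ∧ q = 0 then 1 else 0
  | n + 1, s, q =>
    if s ^ 2 ≤ (n + 1) * q then ∑ a ∈ A, momentTupleCount n (s - a) (q - a ^ 2) else 0

variable {A} {n : ℕ} {s q : ℤ}

theorem mem_momentTuples {x : Fin n → ℤ} :
    x ∈ momentTuples A n s q ↔ (∀ i, x i ∈ A) ∧ ∑ i, x i = s ∧ ∑ i, x i ^ 2 = q := by
  simp only [momentTuples, mem_filter, Fintype.mem_piFinset]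

theorem sq_le_of_mem_momentTuples {x : Fin n → ℤ} (hx : x ∈ momentTuples A n s q) :
    s ^ 2 ≤ n * q := by
  obtain ⟨-, rfl, rfl⟩ := mem_momentTuples.1 hx
  simpa only [card_univ, Fintype.card_fin] using sq_sum_le_card_mul_sum_sq (s := univ) (f := x)

theorem card_momentTuples_succ :
    #(momentTuples A (n + 1) s q) = ∑ a ∈ A, #(momentTuples A n (s - a) (q - a ^ 2)) := by
  rw [← card_sigma]
  refine card_nbij' (fun x => ⟨x 0, Fin.tail x⟩) (fun p => Fin.cons p.1 p.2) ?_ ?_ ?_ ?_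
  · intro x hx
    obtain ⟨hA, hs, hq⟩ := mem_momentTuples.1 hx
    rw [Fin.sum_univ_succ] at hs hq
    exact mem_sigma.2 ⟨hA 0, mem_momentTuples.2
      ⟨fun i => hA i.succ, eq_sub_of_add_eq' hs, eq_sub_of_add_eq' hq⟩⟩
  · rintro ⟨a, y⟩ hp
    obtain ⟨ha, hy⟩ := mem_sigma.1 hp
    obtain ⟨hA, hs, hq⟩ := mem_momentTuples.1 hy
    refine mem_momentTuples.2 ⟨Fin.cases ha hA, ?_, ?_⟩ <;>
      simp only [Fin.sum_univ_succ, Fin.cons_zero, Fin.cons_succ, hs, hq, add_sub_cancel]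
  · intro x _
    exact Fin.cons_self_tail x
  · rintro ⟨a, y⟩ _
    rfl

theorem card_momentTuples : #(momentTuples A n s q) = momentTupleCount A n s q := by
  induction n generalizing s q with
  | zero =>
    simp only [momentTuples, momentTupleCount, univ_eq_empty, sum_empty, eq_comm (a := (0 : ℤ))]
    split_ifs with h <;> simp [h]
  | succ n ih =>
    rw [momentTupleCount]
    split_ifs with h
    · simp only [card_momentTuples_succ, ih]
    · refine card_eq_zero.2 (eq_empty_of_forall_notMem fun x hx => h ?_)
      exact_mod_cast sq_le_of_mem_momentTuples hx

end MomentTuples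

section Lattice

variable {r : ℕ}

/-- The intersection form `nsForm` as a bilinear form. -/
def nsBilin (r : ℕ) : LinearMap.BilinForm ℤ (Fin (r + 1) → ℤ) :=
  LinearMap.mk₂ ℤ (nsForm r)
    (fun u v w => by simp only [nsForm, Pi.add_apply, add_mul, sum_add_distrib]; ring)
    (fun a v w => by
      simp only [nsForm, Pi.smul_apply, smul_eq_mul, mul_assoc, ← mul_sum]; ring)
    (fun u v w => by simp only [nsForm, Pi.add_apply, mul_add, sum_add_distrib]; ring)
    (fun a v w => by
      simp only [nsForm, Pi.smul_apply, smul_eq_mul, mul_left_comm _ a, ← mul_sum]; ring)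

theorem nsBilin_apply (v w : Fin (r + 1) → ℤ) : nsBilin r v w = nsForm r v w := rfl

theorem nsForm_comm (v w : Fin (r + 1) → ℤ) : nsForm r v w = nsForm r w v := by
  simp only [nsForm, mul_comm]

theorem nsForm_sub_left (u v w : Fin (r + 1) → ℤ) :
    nsForm r (u - v) w = nsForm r u w - nsForm r v w := by
  simp only [← nsBilin_apply, map_sub, LinearMap.sub_apply]

theorem nsForm_eVec_zero (v : Fin (r + 1) → ℤ) : nsForm r (eVec r 0) v = v 0 := by
  simp [nsForm, eVec]

theorem nsForm_eVec_succ (i : Fin r) (v : Fin (r + 1) → ℤ) :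
    nsForm r (eVec r i.succ) v = -v i.succ := by
  simp [nsForm, eVec, (Fin.succ_ne_zero i).symm]

theorem mem_Fset_iff {c : Fin (r + 1) → ℤ} :
    c ∈ Fset r ↔ ∑ i : Fin r, c i.succ = 2 - 3 * c 0 ∧ ∑ i : Fin r, c i.succ ^ 2 = c 0 ^ 2 := by
  simp only [Fset, Set.mem_ofPred_eq, nsForm, canK, if_true, Fin.succ_ne_zero, if_false, one_mul,
    ← sq]
  constructor <;> rintro ⟨hk, hsq⟩ <;> constructor <;> linarith

section Bounds

variable {c : Fin (r + 1) → ℤ}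

theorem apply_zero_mem_Icc_of_mem_Fset (hr : r ≤ 8) (hc : c ∈ Fset r) :
    c 0 ∈ Icc (1 : ℤ) 11 := by
  obtain ⟨hsum, hsq⟩ := mem_Fset_iff.1 hc
  have hcs := sq_sum_le_card_mul_sum_sq (s := univ) (f := fun i : Fin r => c i.succ)
  rw [hsum, hsq, card_univ, Fintype.card_fin] at hcs
  have hr' : (r : ℤ) ≤ 8 := by exact_mod_cast hr
  have hdisc : (c 0 - 6) ^ 2 ≤ 32 := by
    nlinarith [mul_le_mul_of_nonneg_right hr' (sq_nonneg (c 0))]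
  rw [mem_Icc]
  constructor <;> nlinarith

theorem apply_succ_mem_Icc_of_mem_Fset (hr : r ≤ 8) (hc : c ∈ Fset r) (i : Fin r) :
    c i.succ ∈ Icc (-4 : ℤ) 0 := by
  obtain ⟨hsum, hsq⟩ := mem_Fset_iff.1 hc
  have hcs := sq_sum_le_card_mul_sum_sq (s := univ.erase i) (f := fun i : Fin r => c i.succ)
  have hQ : 0 ≤ ∑ j ∈ univ.erase i, c j.succ ^ 2 := sum_nonneg fun j _ => sq_nonneg _
  rw [sum_erase_eq_sub (mem_univ i), hsum] at hcs
  rw [sum_erase_eq_sub (mem_univ i), hsq] at hcs hQ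
  have hcard : (#(univ.erase i) : ℤ) ≤ 7 := by
    rw [card_erase_of_mem (mem_univ i), card_univ, Fintype.card_fin]
    omega
  have hdisc : (2 * c 0 - 6 + 3 * c i.succ) ^ 2 + 7 * ((c i.succ + 2) ^ 2 - 8) ≤ 0 := by
    nlinarith [mul_le_mul_of_nonneg_right hcard hQ]
  rw [mem_Icc]
  constructor <;> nlinarith

end Bounds

theorem Fset_eq_image_momentTuples (hr : r ≤ 8) :
    Fset r = ((Icc (1 : ℤ) 11).sigma fun d => momentTuples (Icc (-4) 0) r (2 - 3 * d) (d ^ 2)).image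
      (fun p => (Fin.cons p.1 p.2 : Fin (r + 1) → ℤ)) := by
  ext c
  simp only [coe_image, Set.mem_image, mem_coe, mem_sigma, mem_momentTuples]
  constructor
  · intro hc
    exact ⟨⟨c 0, Fin.tail c⟩, ⟨apply_zero_mem_Icc_of_mem_Fset hr hc,
      apply_succ_mem_Icc_of_mem_Fset hr hc, mem_Fset_iff.1 hc⟩, Fin.cons_self_tail c⟩
  · rintro ⟨⟨d, m⟩, ⟨-, -, hm⟩, rfl⟩
    exact mem_Fset_iff.2 hm

theorem finite_Fset (hr : r ≤ 8) : (Fset r).Finite := by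
  rw [Fset_eq_image_momentTuples hr]
  exact finite_toSet _

theorem ncard_Fset (hr : r ≤ 8) :
    (Fset r).ncard = ∑ d ∈ Icc (1 : ℤ) 11, momentTupleCount (Icc (-4) 0) r (2 - 3 * d) (d ^ 2) := by
  have hinj : Function.Injective
      fun p : (Σ _ : ℤ, Fin r → ℤ) => (Fin.cons p.1 p.2 : Fin (r + 1) → ℤ) := by
    rintro ⟨d, m⟩ ⟨d', m'⟩ h
    obtain ⟨rfl, rfl⟩ := Fin.cons_inj.1 h
    rfl
  rw [Fset_eq_image_momentTuples hr, Set.ncard_coe_finset, card_image_of_injective _ hinj,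
    card_sigma]
  exact sum_congr rfl fun d _ => card_momentTuples

theorem ncard_Fset_eight : (Fset 8).ncard = 2160 := by
  rw [ncard_Fset le_rfl]
  decide +kernel

section Reflections

variable {α : Fin (r + 1) → ℤ}

/-- The reflection `v ↦ v + ⟨α, v⟩ α` of the Neron-Severi lattice in a (-2)-class `α`. -/
def rootReflection (hα : α ∈ Rset r) : (Fin (r + 1) → ℤ) ≃ₗ[ℤ] (Fin (r + 1) → ℤ) :=
  Module.reflection (x := α) (f := -nsBilin r α) (by
    rw [LinearMap.neg_apply, nsBilin_apply, hα.2, neg_neg])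

theorem rootReflection_apply (hα : α ∈ Rset r) (v : Fin (r + 1) → ℤ) :
    rootReflection hα v = v + nsForm r α v • α := by
  rw [rootReflection, Module.reflection_apply, LinearMap.neg_apply, neg_smul, sub_neg_eq_add,
    nsBilin_apply]

theorem rootReflection_involutive (hα : α ∈ Rset r) : Function.Involutive (rootReflection hα) :=
  Module.involutive_reflection _

theorem nsForm_rootReflection (hα : α ∈ Rset r) (v w : Fin (r + 1) → ℤ) :
    nsForm r (rootReflection hα v) (rootReflection hα w) = nsForm r v w := by
  simp only [rootReflection_apply, ← nsBilin_apply, map_add, map_smul, LinearMap.add_apply,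
    LinearMap.smul_apply, smul_eq_mul]
  rw [nsBilin_apply α α, hα.2, nsBilin_apply v α, nsForm_comm v α, ← nsBilin_apply]
  ring

theorem rootReflection_mem_Fset (hα : α ∈ Rset r) {f : Fin (r + 1) → ℤ} (hf : f ∈ Fset r) :
    rootReflection hα f ∈ Fset r := by
  refine ⟨?_, (nsForm_rootReflection hα f f).trans hf.2⟩
  rw [rootReflection_apply, ← nsBilin_apply, map_add, map_smul, nsBilin_apply, nsBilin_apply,
    hα.1, hf.1, smul_zero, add_zero]

/-- The classes in `F_r` joined to `f` by an edge of the simple family graph. -/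
def familyNeighbors (r : ℕ) (f : Fin (r + 1) → ℤ) : Set (Fin (r + 1) → ℤ) :=
  {g ∈ Fset r | 2 ≤ nsForm r f g}

theorem ncard_familyNeighbors_rootReflection (hα : α ∈ Rset r) (f : Fin (r + 1) → ℤ) :
    (familyNeighbors r (rootReflection hα f)).ncard = (familyNeighbors r f).ncard := by
  refine (Set.ncard_congr (fun g _ => rootReflection hα g) ?_ ?_ ?_).symm
  · rintro g ⟨hg, hfg⟩
    exact ⟨rootReflection_mem_Fset hα hg, by rwa [nsForm_rootReflection]⟩
  · intro g h _ _ hgh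
    exact (rootReflection hα).injective hgh
  · rintro g ⟨hg, hfg⟩
    refine ⟨rootReflection hα g, ⟨rootReflection_mem_Fset hα hg, ?_⟩,
      rootReflection_involutive hα g⟩
    rwa [← nsForm_rootReflection hα, rootReflection_involutive hα g]

end Reflections

section Descent

/-- The (-2)-class `e₀ - eᵢ - eⱼ - eₖ`, whose reflection is the quadratic Cremona transformation
based at the points `i, j, k`. -/
def cremonaRoot (i j k : Fin r) : Fin (r + 1) → ℤ :=
  eVec r 0 - eVec r i.succ - eVec r j.succ - eVec r k.succ

theorem nsForm_cremonaRoot (i j k : Fin r) (v : Fin (r + 1) → ℤ) :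
    nsForm r (cremonaRoot i j k) v = v 0 + v i.succ + v j.succ + v k.succ := by
  simp only [cremonaRoot, nsForm_sub_left, nsForm_eVec_zero, nsForm_eVec_succ, sub_neg_eq_add]

theorem cremonaRoot_zero (i j k : Fin r) : cremonaRoot i j k 0 = 1 := by
  simp [cremonaRoot, eVec, (Fin.succ_ne_zero _).symm]

theorem cremonaRoot_mem_Rset {i j k : Fin r} (hij : i ≠ j) (hik : i ≠ k) (hjk : j ≠ k) :
    cremonaRoot i j k ∈ Rset r := by
  constructor
  · rw [nsForm_comm, nsForm_cremonaRoot]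
    simp [canK]
  · rw [nsForm_cremonaRoot, cremonaRoot_zero]
    simp [cremonaRoot, eVec, hij, hij.symm, hik, hik.symm, hjk, hjk.symm]

/-- The class `e₀ - eᵢ` of the conic bundle of lines through the `i`-th point. -/
def conicClass (i : Fin r) : Fin (r + 1) → ℤ :=
  eVec r 0 - eVec r i.succ

theorem nsForm_conicClass (i : Fin r) (v : Fin (r + 1) → ℤ) :
    nsForm r (conicClass i) v = v 0 + v i.succ := by
  rw [conicClass, nsForm_sub_left, nsForm_eVec_zero, nsForm_eVec_succ, sub_neg_eq_add]

theorem conicClass_zero (i : Fin r) : conicClass i 0 = 1 := by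
  simp [conicClass, eVec, (Fin.succ_ne_zero _).symm]

theorem conicClass_succ (i j : Fin r) : conicClass i j.succ = if j = i then -1 else 0 := by
  simp only [conicClass, eVec, Pi.sub_apply, Fin.succ_ne_zero, Fin.succ_inj, if_false]
  split_ifs <;> rfl

theorem conicClass_mem_Fset (i : Fin r) : conicClass i ∈ Fset r := by
  simp [mem_Fset_iff, conicClass_zero, conicClass_succ]

theorem eq_conicClass_of_apply_zero_eq_neg {f : Fin (r + 1) → ℤ} (hf : f ∈ Fset r) {i : Fin r}
    (h : f 0 = -f i.succ) : f = conicClass i := by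
  obtain ⟨hsum, hsq⟩ := mem_Fset_iff.1 hf
  have hrest : ∑ j ∈ univ.erase i, f j.succ ^ 2 = 0 := by
    rw [sum_erase_eq_sub (mem_univ i), hsq, h, neg_sq, sub_self]
  have hzero (j : Fin r) (hj : j ≠ i) : f j.succ = 0 := sq_eq_zero_iff.1
    ((sum_eq_zero_iff_of_nonneg fun _ _ => sq_nonneg _).1 hrest j (mem_erase.2 ⟨hj, mem_univ j⟩))
  rw [Fintype.sum_eq_single i hzero] at hsum
  funext t
  refine Fin.cases ?_ (fun j => ?_) t
  · rw [conicClass_zero]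
    omega
  · rw [conicClass_succ]
    split_ifs with hj
    · subst hj
      omega
    · exact hzero j hj

theorem exists_eq_conicClass {f : Fin (r + 1) → ℤ} (hf : f ∈ Fset r) (h : f 0 = 1) :
    ∃ i, f = conicClass i := by
  obtain ⟨hsum, hsq⟩ := mem_Fset_iff.1 hf
  rw [h] at hsum hsq
  have hbit := eq_zero_or_one_of_sum_sq_eq_sum (s := univ) (x := fun i : Fin r => -f i.succ)
    (by simp only [neg_sq, sum_neg_distrib]; omega)
  obtain ⟨i, -, hi⟩ := exists_ne_zero_of_sum_ne_zero (show ∑ i : Fin r, f i.succ ≠ 0 by omega)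
  refine ⟨i, eq_conicClass_of_apply_zero_eq_neg hf ?_⟩
  rcases hbit i (mem_univ i) with hi' | hi' <;> omega

theorem exists_cremonaRoot_nsForm_neg (hr : r ≤ 8) {f : Fin (r + 1) → ℤ}
    (hf : f ∈ Fset r) (h : 1 < f 0) :
    ∃ i j k, cremonaRoot i j k ∈ Rset r ∧ nsForm r (cremonaRoot i j k) f < 0 := by
  obtain ⟨hsum, hsq⟩ := mem_Fset_iff.1 hf
  obtain ⟨i, j, k, hij, hik, hjk, hlt⟩ := noether_inequality (x := fun i : Fin r => -f i.succ)
    h (fun i => neg_nonneg.2 (mem_Icc.1 (apply_succ_mem_Icc_of_mem_Fset hr hf i)).2)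
    (by rw [sum_neg_distrib, hsum]; ring) (by simpa only [neg_sq] using hsq)
  refine ⟨i, j, k, cremonaRoot_mem_Rset hij hik hjk, ?_⟩
  rw [nsForm_cremonaRoot]
  linarith

theorem Fset_induction (hr : r ≤ 8) {P : (Fin (r + 1) → ℤ) → Prop}
    (conic : ∀ i, P (conicClass i))
    (reflection : ∀ (α : Fin (r + 1) → ℤ) (hα : α ∈ Rset r) (f : Fin (r + 1) → ℤ),
      P (rootReflection hα f) → P f)
    {f : Fin (r + 1) → ℤ} (hf : f ∈ Fset r) : P f := by
  induction hn : (f 0).toNat using Nat.strong_induction_on generalizing f with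
  | _ n ih =>
    have hpos := (mem_Icc.1 (apply_zero_mem_Icc_of_mem_Fset hr hf)).1
    rcases hpos.eq_or_lt with hone | hgt
    · obtain ⟨i, rfl⟩ := exists_eq_conicClass hf hone.symm
      exact conic i
    · obtain ⟨i, j, k, hα, hneg⟩ := exists_cremonaRoot_nsForm_neg hr hf hgt
      refine reflection _ hα f (ih _ ?_ (rootReflection_mem_Fset hα hf) rfl)
      rw [rootReflection_apply, Pi.add_apply, Pi.smul_apply, cremonaRoot_zero, smul_eq_mul]
      omega

end Descent

section Sections

variable (i : Fin r)

/-- The class `(p + 1) e₀ - p eᵢ - ∑_{j ∈ S} eⱼ` with `p = ⌊|S| / 2⌋`. For `|S|` odd and `i ∉ S`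
these are the classes in `F_r` meeting `e₀ - eᵢ` exactly once. -/
def sectionClass (S : Finset (Fin r)) : Fin (r + 1) → ℤ :=
  Fin.cons (((#S / 2 : ℕ) : ℤ) + 1) fun j =>
    if j = i then -((#S / 2 : ℕ) : ℤ) else if j ∈ S then -1 else 0

theorem sectionClass_zero (S : Finset (Fin r)) : sectionClass i S 0 = (#S / 2 : ℕ) + 1 := rfl

theorem sectionClass_succ (S : Finset (Fin r)) (j : Fin r) :
    sectionClass i S j.succ =
      if j = i then -((#S / 2 : ℕ) : ℤ) else if j ∈ S then -1 else 0 := rfl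

variable {i}

theorem sum_comp_sectionClass_succ {S : Finset (Fin r)} (hi : i ∉ S) {φ : ℤ → ℤ} (hφ : φ 0 = 0) :
    ∑ j : Fin r, φ (sectionClass i S j.succ) = φ (-((#S / 2 : ℕ) : ℤ)) + #S * φ (-1) := by
  have hrest : ∑ j ∈ univ.erase i, φ (sectionClass i S j.succ) = ∑ _j ∈ S, φ (-1) := by
    refine (sum_subset_zero_on_sdiff (fun j hj => ?_) (fun j hj => ?_) fun j hj => ?_).symm
    · exact mem_erase.2 ⟨ne_of_mem_of_not_mem hj hi, mem_univ j⟩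
    · obtain ⟨hji, hjS⟩ := mem_sdiff.1 hj
      rw [sectionClass_succ, if_neg (ne_of_mem_erase hji), if_neg hjS, hφ]
    · rw [sectionClass_succ, if_neg (ne_of_mem_of_not_mem hj hi), if_pos hj]
  rw [← add_sum_erase _ _ (mem_univ i), hrest, sectionClass_succ, if_pos rfl, sum_const,
    nsmul_eq_mul]

theorem sectionClass_mem_Fset {S : Finset (Fin r)} (hi : i ∉ S) (hS : Odd #S) :
    sectionClass i S ∈ Fset r := by
  have hcard : (#S : ℤ) = 2 * (#S / 2 : ℕ) + 1 := by
    exact_mod_cast (Nat.two_mul_div_two_add_one_of_odd hS).symm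
  refine mem_Fset_iff.2 ⟨(sum_comp_sectionClass_succ hi (φ := id) rfl).trans ?_,
    (sum_comp_sectionClass_succ hi (φ := (· ^ 2)) (zero_pow two_ne_zero)).trans ?_⟩
  all_goals
    simp only [sectionClass_zero, hcard, id]
    ring

theorem nsForm_conicClass_sectionClass (S : Finset (Fin r)) :
    nsForm r (conicClass i) (sectionClass i S) = 1 := by
  rw [nsForm_conicClass, sectionClass_zero, sectionClass_succ, if_pos rfl]
  ring

theorem exists_eq_sectionClass {g : Fin (r + 1) → ℤ} (hg : g ∈ Fset r)
    (h : nsForm r (conicClass i) g = 1) :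
    ∃ S, i ∉ S ∧ Odd #S ∧ sectionClass i S = g := by
  obtain ⟨hsum, hsq⟩ := mem_Fset_iff.1 hg
  rw [nsForm_conicClass] at h
  have hrest : ∑ j ∈ univ.erase i, -g j.succ = 2 * g 0 - 1 := by
    rw [sum_neg_distrib, sum_erase_eq_sub (mem_univ i), hsum]
    linarith
  have hrest_sq : ∑ j ∈ univ.erase i, (-g j.succ) ^ 2 = 2 * g 0 - 1 := by
    simp only [neg_sq]
    rw [sum_erase_eq_sub (mem_univ i), hsq, eq_sub_of_add_eq' h]
    ring
  have hbit := eq_zero_or_one_of_sum_sq_eq_sum (hrest_sq.trans hrest.symm)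
  set S : Finset (Fin r) := {j ∈ univ.erase i | -g j.succ = 1} with hS
  have hmem (j : Fin r) (hj : j ≠ i) : g j.succ = if j ∈ S then -1 else 0 := by
    have := hbit j (mem_erase.2 ⟨hj, mem_univ j⟩)
    simp only [hS, mem_filter, mem_erase, mem_univ, hj, ne_eq, not_false_eq_true, true_and]
    split_ifs <;> omega
  have hcard : (#S : ℤ) = 2 * g 0 - 1 := by
    rw [← hrest, hS, card_filter, Nat.cast_sum]
    refine sum_congr rfl fun j hj => ?_
    rcases hbit j hj with h0 | h1
    · simp [h0]
    · simp [h1]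
  refine ⟨S, by simp [hS], by rw [← Int.odd_coe_nat, hcard]; exact ⟨g 0 - 1, by ring⟩, ?_⟩
  funext t
  refine Fin.cases ?_ (fun j => ?_) t
  · rw [sectionClass_zero]
    omega
  · rw [sectionClass_succ]
    split_ifs with hj hjS
    · subst hj
      omega
    · rw [hmem j hj, if_pos hjS]
    · rw [hmem j hj, if_neg hjS]

theorem sectionClass_injOn : Set.InjOn (sectionClass i) {S | i ∉ S} := by
  intro S hS T hT h
  ext j
  by_cases hj : j = i
  · subst hj
    exact iff_of_false hS hT
  · have := congrFun h j.succ
    rw [sectionClass_succ, sectionClass_succ, if_neg hj, if_neg hj] at this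
    split_ifs at this <;> simp_all

variable (i)

theorem setOf_nsForm_conicClass_eq_one :
    {g ∈ Fset r | nsForm r (conicClass i) g = 1} = sectionClass i '' {S | i ∉ S ∧ Odd #S} := by
  ext g
  constructor
  · rintro ⟨hg, h⟩
    obtain ⟨S, hi, hS, rfl⟩ := exists_eq_sectionClass hg h
    exact ⟨S, ⟨hi, hS⟩, rfl⟩
  · rintro ⟨S, ⟨hi, hS⟩, rfl⟩
    exact ⟨sectionClass_mem_Fset hi hS, nsForm_conicClass_sectionClass S⟩

theorem ncard_nsForm_conicClass_eq_one (hr : 2 ≤ r) :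
    {g ∈ Fset r | nsForm r (conicClass i) g = 1}.ncard = 2 ^ (r - 2) := by
  have hcoe : {S : Finset (Fin r) | i ∉ S ∧ Odd #S} =
      ({S ∈ (univ.erase i).powerset | Odd #S} : Finset (Finset (Fin r))) := by
    ext S
    simp [subset_erase]
  have hcard : #(univ.erase i) = r - 2 + 1 := by
    rw [card_erase_of_mem (mem_univ i), card_univ, Fintype.card_fin]
    omega
  have hodd := two_mul_card_filter_odd_powerset (s := univ.erase i)
    (card_pos.1 (by rw [hcard]; exact Nat.succ_pos _))
  rw [hcard, pow_succ'] at hodd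
  have hinj : Set.InjOn (sectionClass i) {S | i ∉ S ∧ Odd #S} :=
    sectionClass_injOn.mono fun _ hS => hS.1
  rw [setOf_nsForm_conicClass_eq_one, hinj.ncard_image, hcoe, Set.ncard_coe_finset]
  exact Nat.eq_of_mul_eq_mul_left two_pos hodd

theorem nsForm_conicClass_nonneg (hr : r ≤ 8) {g : Fin (r + 1) → ℤ} (hg : g ∈ Fset r) :
    0 ≤ nsForm r (conicClass i) g := by
  have hpos := (mem_Icc.1 (apply_zero_mem_Icc_of_mem_Fset hr hg)).1
  have hle : g i.succ ^ 2 ≤ g 0 ^ 2 := by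
    rw [← (mem_Fset_iff.1 hg).2]
    exact single_le_sum (f := fun j : Fin r => g j.succ ^ 2) (fun j _ => sq_nonneg _) (mem_univ i)
  rw [nsForm_conicClass]
  linarith [(abs_le.1 (abs_le_of_sq_le_sq hle (by linarith))).1]

theorem Fset_diff_familyNeighbors_conicClass (hr : r ≤ 8) :
    Fset r \ familyNeighbors r (conicClass i) =
      insert (conicClass i) {g ∈ Fset r | nsForm r (conicClass i) g = 1} := by
  ext g
  simp only [familyNeighbors, Set.mem_sdiff, Set.mem_insert_iff, Set.mem_ofPred_eq, not_and, not_le]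
  constructor
  · rintro ⟨hg, hlt⟩
    have hnonneg := nsForm_conicClass_nonneg i hr hg
    rcases (show nsForm r (conicClass i) g = 0 ∨ nsForm r (conicClass i) g = 1 by
      have := hlt hg; omega) with h0 | h1
    · rw [nsForm_conicClass] at h0
      exact Or.inl (eq_conicClass_of_apply_zero_eq_neg hg (eq_neg_of_add_eq_zero_left h0))
    · exact Or.inr ⟨hg, h1⟩
  · rintro (rfl | ⟨hg, h1⟩)
    · exact ⟨conicClass_mem_Fset i, fun hc => by rw [hc.2]; norm_num⟩
    · exact ⟨hg, fun _ => by rw [h1]; norm_num⟩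

theorem ncard_familyNeighbors_conicClass (hr : 2 ≤ r) (hr' : r ≤ 8) :
    (familyNeighbors r (conicClass i)).ncard + (2 ^ (r - 2) + 1) = (Fset r).ncard := by
  have hfin := finite_Fset hr'
  have hnot_mem : conicClass i ∉ {g ∈ Fset r | nsForm r (conicClass i) g = 1} :=
    fun h => zero_ne_one ((conicClass_mem_Fset i).2.symm.trans h.2)
  have hsub : familyNeighbors r (conicClass i) ⊆ Fset r := Set.sep_subset _ _
  rw [← Set.ncard_sdiff_add_ncard_of_subset hsub hfin,
    Fset_diff_familyNeighbors_conicClass i hr',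
    Set.ncard_insert_of_notMem hnot_mem (hfin.subset (Set.sep_subset _ _)),
    ncard_nsForm_conicClass_eq_one i hr, add_comm]

end Sections

theorem ncard_familyNeighbors (hr : 2 ≤ r) (hr' : r ≤ 8) {f : Fin (r + 1) → ℤ}
    (hf : f ∈ Fset r) :
    (familyNeighbors r f).ncard + (2 ^ (r - 2) + 1) = (Fset r).ncard := by
  refine Fset_induction
    (P := fun f => (familyNeighbors r f).ncard + (2 ^ (r - 2) + 1) = (Fset r).ncard) hr'
    (fun i => ncard_familyNeighbors_conicClass i hr hr') (fun α hα f hrefl => ?_) hf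
  rwa [← ncard_familyNeighbors_rootReflection hα]

end Lattice

section FamilyGraph

theorem two_mul_ncard_edgeSet {V : Type*} [Finite V] (G : SimpleGraph V) {k : ℕ}
    (h : ∀ v, (G.neighborSet v).ncard = k) : 2 * G.edgeSet.ncard = Nat.card V * k := by
  classical
  have := Fintype.ofFinite V
  have hdeg (v : V) : G.degree v = k := by
    rw [← h v, ← SimpleGraph.card_neighborSet_eq_degree, ← Nat.card_eq_fintype_card]
    rfl
  rw [← SimpleGraph.coe_edgeFinset, Set.ncard_coe_finset,
    ← SimpleGraph.sum_degrees_eq_twice_card_edges]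
  simp only [hdeg, sum_const, card_univ, smul_eq_mul, Nat.card_eq_fintype_card]

/-- The simple family graph on all of `F_r`: two classes are adjacent when their intersection
number is at least two. -/
def familyGraph (r : ℕ) : SimpleGraph (Fset r) where
  Adj f g := 2 ≤ nsForm r f g
  symm := ⟨fun f g h => by rwa [nsForm_comm]⟩
  loopless := ⟨fun f h => by rw [f.2.2] at h; norm_num at h⟩

theorem ncard_neighborSet_familyGraph {r : ℕ} (f : Fset r) :
    ((familyGraph r).neighborSet f).ncard = (familyNeighbors r f).ncard := by
  rw [← Set.ncard_image_of_injective _ Subtype.val_injective]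
  congr 1
  ext g
  exact ⟨fun ⟨g, hfg, hg⟩ => hg ▸ ⟨g.2, hfg⟩, fun ⟨hg, hfg⟩ => ⟨⟨g, hg⟩, hfg, rfl⟩⟩

theorem ncard_edgeSet_familyGraph (r : ℕ) :
    {p : Set (Fin (r + 1) → ℤ) |
      ∃ f ∈ Fset r, ∃ g ∈ Fset r, f ≠ g ∧ 2 ≤ nsForm r f g ∧ p = {f, g}}.ncard =
      (familyGraph r).edgeSet.ncard := by
  have hinj : Function.Injective fun e : Sym2 (Fset r) => Subtype.val '' (e : Set (Fset r)) :=
    Subtype.val_injective.image_injective.comp SetLike.coe_injective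
  rw [← Set.ncard_image_of_injective _ hinj]
  congr 1
  ext p
  constructor
  · rintro ⟨f, hf, g, hg, -, hfg, rfl⟩
    exact ⟨s(⟨f, hf⟩, ⟨g, hg⟩), hfg, by simp only [Sym2.coe_mk, Set.image_pair]⟩
  · rintro ⟨⟨f, g⟩, hfg, rfl⟩
    have hne : f ≠ g := (familyGraph r).ne_of_adj hfg
    exact ⟨f, f.2, g, g.2, Subtype.coe_ne_coe.2 hne, hfg,
      by simp only [Sym2.coe_mk, Set.image_pair]⟩

end FamilyGraph

theorem stmt_13_general {r : ℕ} (hr : 2 ≤ r) (hr' : r ≤ 8) :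
    2 * {p : Set (Fin (r + 1) → ℤ) |
      ∃ f ∈ Fset r, ∃ g ∈ Fset r, f ≠ g ∧ 2 ≤ nsForm r f g ∧ p = {f, g}}.ncard =
      (Fset r).ncard * ((Fset r).ncard - (2 ^ (r - 2) + 1)) := by
  have : Finite (Fset r) := (finite_Fset hr').to_subtype
  rw [ncard_edgeSet_familyGraph, two_mul_ncard_edgeSet (familyGraph r), Nat.card_coe_set_eq]
  intro f
  rw [ncard_neighborSet_familyGraph]
  exact Nat.eq_sub_of_add_eq (ncard_familyNeighbors hr hr' f.2)

/-- The number of unordered pairs {f,g} of distinct elements of F_8 with ⟨f,g⟩ ≥ 2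
is exactly 2262600: a simple family graph of a real weak del Pezzo surface has at most
2262600 edges. -/
theorem stmt_13 :
    {p : Set (Fin 9 → ℤ) |
      ∃ f ∈ Fset 8, ∃ g ∈ Fset 8, f ≠ g ∧ 2 ≤ nsForm 8 f g ∧ p = {f, g}}.ncard
      = 2262600 := by
  have hedges := stmt_13_general (r := 8) (by norm_num) le_rfl
  refine Nat.eq_of_mul_eq_mul_left two_pos (hedges.trans ?_)
  rw [ncard_Fset_eight]
  norm_num
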